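/- Let n ≥ 2 be even and let k_1,…,k_{n+2} be positive natural numbers. Then 3·a_n − a_{n−2} ≤ 𝔉c([k_1, …, k_{n+2}]) ≤ Fib(n+3) + Fib(n+1), where (a_k) is the Padovan sequence and Fib is the Fibonacci sequence with Fib(1) = Fib(2) = 1; both bounds are attained (the lower bound when all k_i = 1 and the upper bound when all k_i = 2). -/

import Mathlib

/-- The open-chain AND-OR network map determined by an operator list `ops`
(`true` = AND, `false` = OR), on `ops.length + 2` nodes. -/
def chainMap (ops : List Bool) (x : Fin (ops.length + 2) → Bool) :
    Fin (ops.length + 2) → Bool := fun i =>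
  if h0 : (i : ℕ) = 0 then x ⟨1, by omega⟩
  else if hn : (i : ℕ) = ops.length + 1 then x ⟨ops.length, by omega⟩
  else
    have hi : 1 ≤ (i : ℕ) ∧ (i : ℕ) ≤ ops.length := by
      have := i.isLt; omega
    if ops.get ⟨(i : ℕ) - 1, by omega⟩
    then x ⟨(i : ℕ) - 1, by omega⟩ && x ⟨(i : ℕ) + 1, by omega⟩
    else x ⟨(i : ℕ) - 1, by omega⟩ || x ⟨(i : ℕ) + 1, by omega⟩

/-- `F ops` is the number of fixed points of the open-chain AND-OR network. -/
noncomputable def F (ops : List Bool) : ℕ :=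
  Nat.card {x : Fin (ops.length + 2) → Bool // chainMap ops x = x}

/-- Run-length encoding: block `j` (1-based) consists of `k_j` copies of
`true` if `j` is odd and `false` if `j` is even. -/
def runOps : List ℕ → List Bool
  | [] => []
  | k :: t => List.replicate k true ++ (runOps t).map (fun b => !b)

/-- `Fr L` = 𝔉(L), the number of fixed points of the open-chain AND-OR
network with run-length list `L`. -/
noncomputable def Fr (L : List ℕ) : ℕ := F (runOps L)

/-- The Padovan sequence: `a 0 = a 1 = a 2 = 1` and `a (k+3) = a (k+1) + a k`. -/
def padovan : ℕ → ℕ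
  | 0 => 1
  | 1 => 1
  | 2 => 1
  | n + 3 => padovan (n + 1) + padovan n

/-- The closed-chain AND-OR network map on `ZMod n` determined by
`ops : ZMod n → Bool` (`true` = AND, `false` = OR). -/
def cycleMap {n : ℕ} (ops : ZMod n → Bool) (x : ZMod n → Bool) :
    ZMod n → Bool := fun i =>
  if ops i then x (i - 1) && x (i + 1) else x (i - 1) || x (i + 1)

/-- `Fc ops` is the number of fixed points of the closed-chain AND-OR network. -/
noncomputable def Fc {n : ℕ} (ops : ZMod n → Bool) : ℕ :=
  Nat.card {x : ZMod n → Bool // cycleMap ops x = x}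

/-- The cyclic operator assignment for run-length list `L`: going cyclically
from index `0`, a block of `k_j` consecutive values equal to `true` if `j` is
odd and `false` if `j` is even. -/
def cOps (L : List ℕ) : ZMod L.sum → Bool :=
  fun i => (runOps L).getD i.val false

/-- `Frc L` = 𝔉c(L), the number of fixed points of the closed-chain AND-OR
network with run-length list `L`. -/
noncomputable def Frc (L : List ℕ) : ℕ := Fc (cOps L)

/-!
The fixed points of a closed chain are the closed walks of pairs `(x (i - 1), x i)` of consecutive
states, so `Fc` is the trace of a product of `4 × 4` transfer matrices, one per node. By De Morgan,
flipping both states conjugates the AND matrix `A` into the OR matrix; writing `P` for the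
involution that flips them, a chain with evenly many runs `k₁, …, k_r` has
`tr (A ^ k₁ P ⋯ A ^ k_r P)` fixed points. Since `A ≤ A ^ k ≤ A ^ 2 = A ^ (k + 1)` entrywise for
`k ≥ 1`, the extremes are `tr ((A P) ^ r)` and `tr ((A ^ 2 P) ^ r)`. The nonzero eigenvalues of
`A P` are the roots of `X ^ 3 - X - 1`, those of `A ^ 2 P` the roots of `X ^ 2 - X - 1`, whence the
Padovan and Fibonacci numbers.
-/

section MatrixProducts

variable {ι R : Type*} [Fintype ι] [DecidableEq ι] [CommSemiring R]

theorem list_ofFn_prod_apply {n : ℕ} (M : Fin (n + 1) → Matrix ι ι R) (a b : ι) :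
    (List.ofFn M).prod a b =
      ∑ s : Fin n → ι, ∏ i, M i ((Fin.cons a s : Fin (n + 1) → ι) i)
        ((Fin.snoc s b : Fin (n + 1) → ι) i) := by
  induction n generalizing a with
  | zero => simp [Fin.snoc]
  | succ n ih =>
    have hsnoc (c : ι) (s : Fin n → ι) :
        (Fin.snoc (Fin.cons c s : Fin (n + 1) → ι) b : Fin (n + 2) → ι) =
          Fin.cons c (Fin.snoc s b : Fin (n + 1) → ι) :=
      (Fin.cons_snoc_eq_snoc_cons ..).symm
    rw [← (Fin.consEquiv fun _ : Fin (n + 1) => ι).sum_comp, Fintype.sum_prod_type,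
      List.ofFn_succ, List.prod_cons, Matrix.mul_apply]
    simp only [ih, Finset.mul_sum, Fin.consEquiv, Equiv.coe_fn_mk, Fin.prod_univ_succ (n := n + 1),
      hsnoc, Fin.cons_zero, Fin.cons_succ]

theorem trace_list_ofFn_prod {n : ℕ} (M : Fin (n + 1) → Matrix ι ι R) :
    (List.ofFn M).prod.trace = ∑ s : Fin (n + 1) → ι, ∏ i, M i (s i) (s (i + 1)) := by
  rw [← (Fin.consEquiv fun _ : Fin (n + 1) => ι).sum_comp, Fintype.sum_prod_type]
  simp only [Matrix.trace, Matrix.diag, list_ofFn_prod_apply, Fin.snoc_eq_cons_rotate,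
    finRotate_apply, Fin.consEquiv_apply]

variable [PartialOrder R] [IsOrderedRing R] [CanonicallyOrderedAdd R]

theorem list_prod_map_apply_le {β : Type*} {f g : β → Matrix ι ι R} {l : List β}
    (h : ∀ k ∈ l, ∀ i j, f k i j ≤ g k i j) (i j : ι) :
    (l.map f).prod i j ≤ (l.map g).prod i j := by
  induction l generalizing i with
  | nil => exact le_rfl
  | cons k l ih =>
    obtain ⟨hk, hl⟩ := List.forall_mem_cons.1 h
    simp only [List.map_cons, List.prod_cons, Matrix.mul_apply]
    exact Finset.sum_le_sum fun u _ => mul_le_mul' (hk i u) (ih hl u)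

theorem trace_list_prod_map_le {β : Type*} {f g : β → Matrix ι ι R} {l : List β}
    (h : ∀ k ∈ l, ∀ i j, f k i j ≤ g k i j) :
    (l.map f).prod.trace ≤ (l.map g).prod.trace :=
  Finset.sum_le_sum fun i _ => list_prod_map_apply_le h i i

end MatrixProducts

section TransferMatrix

variable {α : Type*} [DecidableEq α]

/-- The transfer matrix of the local rule `x i = g (x (i - 1)) (x (i + 1))`: its rows are indexed by
the pairs `(x (i - 1), x i)`, its columns by the pairs `(x i, x (i + 1))`. -/
def transferMatrix (g : α → α → α) : Matrix (α × α) (α × α) ℕ :=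
  Matrix.of fun s t => if s.2 = t.1 ∧ g s.1 t.2 = s.2 then 1 else 0

/-- The cyclic configurations that obey the local rules `g`, encoded by their pairs of consecutive
states; these form the closed walks counted by a trace of transfer matrices. -/
def fixedPointsEquivClosedWalks {n : ℕ} (g : Fin (n + 1) → α → α → α) :
    {x : Fin (n + 1) → α // ∀ i, g i (x (i - 1)) (x (i + 1)) = x i} ≃
      {s : Fin (n + 1) → α × α //
        ∀ i, (s i).2 = (s (i + 1)).1 ∧ g i (s i).1 (s (i + 1)).2 = (s i).2} where
  toFun x := ⟨fun i => (x.1 (i - 1), x.1 i), fun i => by simpa using x.2 i⟩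
  invFun s := ⟨fun i => (s.1 i).2, fun i => by simpa [(s.2 (i - 1)).1] using (s.2 i).2⟩
  left_inv _ := rfl
  right_inv s := by
    ext i
    · simpa using (s.2 (i - 1)).1
    · rfl

theorem card_fixedPoints_eq_trace [Fintype α] {n : ℕ} (g : Fin (n + 1) → α → α → α) :
    Nat.card {x : Fin (n + 1) → α // ∀ i, g i (x (i - 1)) (x (i + 1)) = x i} =
      (List.ofFn fun i => transferMatrix (g i)).prod.trace := by
  rw [Nat.card_congr (fixedPointsEquivClosedWalks g), Nat.card_eq_fintype_card,
    Fintype.card_subtype, trace_list_ofFn_prod]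
  simp only [transferMatrix, Matrix.of_apply, Finset.prod_boole, Finset.mem_univ, true_imp_iff,
    Finset.sum_boole, Nat.cast_id]

end TransferMatrix

/-- The transfer matrix of an AND node (`o = true`) or an OR node (`o = false`). -/
def gateMatrix (o : Bool) : Matrix (Bool × Bool) (Bool × Bool) ℕ :=
  transferMatrix fun a c => if o then a && c else a || c

theorem Fc_eq_trace {n : ℕ} (ops : ZMod (n + 1) → Bool) :
    Fc ops = (List.ofFn (n := n + 1) fun i => gateMatrix (ops i)).prod.trace := by
  rw [Fc]
  simp only [funext_iff]
  exact card_fixedPoints_eq_trace (n := n) fun i a c => if ops i then a && c else a || c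

theorem length_runOps (L : List ℕ) : (runOps L).length = L.sum := by
  induction L with
  | nil => rfl
  | cons k t ih => simp [runOps, ih]

theorem Frc_eq_trace {L : List ℕ} (hL : L.sum ≠ 0) :
    Frc L = ((runOps L).map gateMatrix).prod.trace := by
  have hlen := length_runOps L
  unfold Frc cOps
  generalize L.sum = N at hL hlen ⊢
  obtain ⟨n, rfl⟩ := Nat.exists_eq_succ_of_ne_zero hL
  rw [Fc_eq_trace]
  congr 2
  refine List.ext_getElem (by simp [hlen]) fun i _ _ => ?_
  rw [List.getElem_ofFn, List.getElem_map]
  exact congrArg gateMatrix (List.getD_eq_getElem ..)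

/-- The permutation matrix negating both entries of a pair of states. -/
def negMatrix : Matrix (Bool × Bool) (Bool × Bool) ℕ :=
  Equiv.Perm.permMatrix ℕ (Equiv.prodCongr Equiv.boolNot Equiv.boolNot)

theorem negMatrix_mul_self : negMatrix * negMatrix = 1 := by
  decide

-- De Morgan's laws, in matrix form.
theorem gateMatrix_not (o : Bool) : gateMatrix (!o) = negMatrix * gateMatrix o * negMatrix := by
  decide +revert

theorem prod_gateMatrix_not (ops : List Bool) :
    ((ops.map not).map gateMatrix).prod = negMatrix * (ops.map gateMatrix).prod * negMatrix := by
  induction ops with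
  | nil => simp [negMatrix_mul_self]
  | cons o ops ih =>
    simp only [List.map_cons, List.prod_cons, ih, gateMatrix_not, mul_assoc]
    rw [← mul_assoc negMatrix negMatrix, negMatrix_mul_self, one_mul]

/-- The contribution of a run of `k` equal gates. The factor `negMatrix` exchanges the roles of AND
and OR for the rest of the chain, so that every run can be treated as a run of AND gates. -/
def runMatrix (k : ℕ) : Matrix (Bool × Bool) (Bool × Bool) ℕ :=
  gateMatrix true ^ k * negMatrix

theorem prod_gateMatrix_runOps (L : List ℕ) :
    ((runOps L).map gateMatrix).prod * negMatrix ^ L.length = (L.map runMatrix).prod := by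
  induction L with
  | nil => simp [runOps]
  | cons k t ih =>
    calc ((runOps (k :: t)).map gateMatrix).prod * negMatrix ^ (t.length + 1)
        = gateMatrix true ^ k * negMatrix * ((runOps t).map gateMatrix).prod *
            (negMatrix * negMatrix) * negMatrix ^ t.length := by
          rw [runOps, List.map_append, List.prod_append, prod_gateMatrix_not, pow_succ']
          simp only [List.map_replicate, List.prod_replicate, mul_assoc]
      _ = runMatrix k * (((runOps t).map gateMatrix).prod * negMatrix ^ t.length) := by
          rw [negMatrix_mul_self, mul_one, runMatrix, mul_assoc (_ * _)]
      _ = ((k :: t).map runMatrix).prod := by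
          rw [ih, List.map_cons, List.prod_cons]

theorem Frc_eq_trace_of_even {L : List ℕ} (hL : L.sum ≠ 0) (heven : Even L.length) :
    Frc L = (L.map runMatrix).prod.trace := by
  have hneg : negMatrix ^ L.length = 1 := by
    obtain ⟨r, hr⟩ := heven
    rw [hr, ← two_mul, pow_mul, sq, negMatrix_mul_self, one_pow]
  rw [Frc_eq_trace hL, ← prod_gateMatrix_runOps, hneg, mul_one]

theorem gateMatrix_true_pow_add_two (k : ℕ) : gateMatrix true ^ (k + 2) = gateMatrix true ^ 2 := by
  have hcube : gateMatrix true ^ 2 * gateMatrix true = gateMatrix true ^ 2 := by decide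
  induction k with
  | zero => rfl
  | succ k ih => rw [add_right_comm, pow_succ, ih, hcube]

theorem runMatrix_add_two (k : ℕ) : runMatrix (k + 2) = runMatrix 2 := by
  rw [runMatrix, gateMatrix_true_pow_add_two, runMatrix]

theorem runMatrix_one_le_runMatrix_two (s t : Bool × Bool) :
    runMatrix 1 s t ≤ runMatrix 2 s t := by
  have h : ∀ p : (Bool × Bool) × Bool × Bool, runMatrix 1 p.1 p.2 ≤ runMatrix 2 p.1 p.2 := by
    decide
  exact h (s, t)

theorem runMatrix_one_le {k : ℕ} (hk : 1 ≤ k) (s t : Bool × Bool) :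
    runMatrix 1 s t ≤ runMatrix k s t := by
  match k, hk with
  | 1, _ => exact le_rfl
  | k + 2, _ => exact runMatrix_add_two k ▸ runMatrix_one_le_runMatrix_two s t

theorem runMatrix_le_two {k : ℕ} (hk : 1 ≤ k) (s t : Bool × Bool) :
    runMatrix k s t ≤ runMatrix 2 s t := by
  match k, hk with
  | 1, _ => exact runMatrix_one_le_runMatrix_two s t
  | k + 2, _ => exact runMatrix_add_two k ▸ le_rfl

theorem trace_runMatrix_one_pow (n : ℕ) :
    (runMatrix 1 ^ (n + 4)).trace + padovan n = 3 * padovan (n + 2) := by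
  have hannihilate : runMatrix 1 ^ 4 = runMatrix 1 ^ 2 + runMatrix 1 := by decide
  have hrec (m : ℕ) : (runMatrix 1 ^ (m + 4)).trace =
      (runMatrix 1 ^ (m + 2)).trace + (runMatrix 1 ^ (m + 1)).trace := by
    rw [pow_add, hannihilate, mul_add, Matrix.trace_add, ← pow_add, ← pow_succ]
  induction n using Nat.strong_induction_on with
  | _ n ih =>
    match n, ih with
    | 0, _ => decide
    | 1, _ => decide
    | 2, _ => decide
    | m + 3, ih =>
      have h₀ := ih m (by lia)
      have h₁ := ih (m + 1) (by lia)
      have h := hrec (m + 3)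
      grind [padovan]

theorem trace_runMatrix_two_pow (n : ℕ) :
    (runMatrix 2 ^ (n + 1)).trace = Nat.fib (n + 2) + Nat.fib n := by
  have hannihilate : runMatrix 2 ^ 3 = runMatrix 2 ^ 2 + runMatrix 2 := by decide
  have hrec (m : ℕ) : (runMatrix 2 ^ (m + 3)).trace =
      (runMatrix 2 ^ (m + 2)).trace + (runMatrix 2 ^ (m + 1)).trace := by
    rw [pow_add, hannihilate, mul_add, Matrix.trace_add, ← pow_add, ← pow_succ]
  induction n using Nat.twoStepInduction with
  | zero => decide
  | one => decide
  | more n ih₀ ih₁ =>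
    rw [hrec, ih₀, ih₁, Nat.fib_add_two (n := n + 2), Nat.fib_add_two (n := n)]
    ring

theorem Frc_replicate {m k : ℕ} (hm : Even m) (hm₀ : m ≠ 0) (hk : k ≠ 0) :
    Frc (List.replicate m k) = (runMatrix k ^ m).trace := by
  rw [Frc_eq_trace_of_even (by simp [hm₀, hk]) (by simpa using hm), List.map_replicate,
    List.prod_replicate]

theorem Frc_mem_Icc {L : List ℕ} (hL : L ≠ []) (heven : Even L.length) (hpos : ∀ k ∈ L, 1 ≤ k) :
    Frc L ∈ Set.Icc (Frc (List.replicate L.length 1)) (Frc (List.replicate L.length 2)) := by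
  have hlen : L.length ≠ 0 := by simpa using hL
  have hsum : L.sum ≠ 0 := by
    obtain ⟨k, hk⟩ := List.exists_mem_of_ne_nil L hL
    have := hpos k hk
    have := List.le_sum_of_mem hk
    lia
  have hconst (c : ℕ) (hc : c ≠ 0) :
      Frc (List.replicate L.length c) = (L.map fun _ => runMatrix c).prod.trace := by
    rw [Frc_replicate heven hlen hc, List.map_const', List.prod_replicate]
  rw [Frc_eq_trace_of_even hsum heven, hconst 1 one_ne_zero, hconst 2 two_ne_zero]
  exact ⟨trace_list_prod_map_le fun k hk => runMatrix_one_le (hpos k hk),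
    trace_list_prod_map_le fun k hk => runMatrix_le_two (hpos k hk)⟩

/-- sharp bounds for closed chains of even run count
`n + 2` (`n ≥ 2` even):
`3·a_n - a_{n-2} ≤ 𝔉c([k₁,…,k_{n+2}]) ≤ Fib (n+3) + Fib (n+1)`, attained
when all `kᵢ = 1` resp. all `kᵢ = 2`. -/
theorem andor_closed_chain_sharp_bounds (n : ℕ) (hn : 2 ≤ n)
    (hne : Even n) (L : List ℕ) (hlen : L.length = n + 2)
    (hpos : ∀ k ∈ L, 1 ≤ k) :
    3 * padovan n - padovan (n - 2) ≤ Frc L ∧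
    Frc L ≤ Nat.fib (n + 3) + Nat.fib (n + 1) ∧
    Frc (List.replicate (n + 2) 1) = 3 * padovan n - padovan (n - 2) ∧
    Frc (List.replicate (n + 2) 2) = Nat.fib (n + 3) + Nat.fib (n + 1) := by
  have heven : Even (n + 2) := hne.add even_two
  have hone : Frc (List.replicate (n + 2) 1) = 3 * padovan n - padovan (n - 2) := by
    obtain ⟨m, rfl⟩ := Nat.exists_eq_add_of_le' hn
    rw [Frc_replicate heven (by lia) one_ne_zero, Nat.add_sub_cancel,
      ← trace_runMatrix_one_pow m, Nat.add_sub_cancel]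
  have htwo : Frc (List.replicate (n + 2) 2) = Nat.fib (n + 3) + Nat.fib (n + 1) := by
    rw [Frc_replicate heven (by lia) two_ne_zero, trace_runMatrix_two_pow]
  obtain ⟨hlower, hupper⟩ :=
    Frc_mem_Icc (List.ne_nil_of_length_pos (by lia)) (hlen ▸ heven) hpos
  rw [hlen] at hlower hupper
  exact ⟨hone ▸ hlower, htwo ▸ hupper, hone, htwo⟩
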